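/- Let n be odd and let D be a submodule of (Fin n → ZMod 2) whose orthogonal complement D^⊥ (with respect to the standard dot product) is strictly contained in D, and let k = dim D − dim D^⊥. Then there exists a family w : Fin k → (Fin n → ZMod 2) with w j ∈ D for every j, such that D = D^⊥ + span{w 0, …, w (k−1)} and w i ⬝ w j = 1 if i = j and w i ⬝ w j = 0 if i ≠ j. -/

import Mathlib

/-!
The dot product on `D` has radical `D^⊥` (as `D^⊥ ⊆ D`), so the claim is that the induced
nondegenerate symmetric form on `D / D^⊥` has an orthonormal basis, lifted to `D`.

Over `ZMod 2` this requires that the form is not alternating, which is where odd `n` enters: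
`v ⬝ v = v ⬝ 1` for the all-ones vector `1`, so if all vectors of `D` were isotropic, then
`1 ∈ D^⊥ ⊆ D`, whence `0 = 1 ⬝ 1 = n`, a contradiction (`exists_dot_self_eq_one`).

Orthonormal families are linearly independent, so there is one of maximal length in `D`; it is
nonempty by the previous remark. Let `R` be the set of vectors of `D` orthogonal to it.
Every `e ∈ R` is isotropic, since otherwise `e` could be adjoined. Any two `e, f ∈ R` are
orthogonal: if `e ⬝ f = 1`, a member `u` of the family could be replaced by the three orthonormal
vectors `u + e`, `u + f`, `u + e + f` (`dot_eq_zero_of_maximal`). As `D` is spanned by `R` and the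
family, `R ⊆ D^⊥`, so the family generates `D` over `D^⊥`; a dimension count gives its length.
-/

/-- Standard dot product over `ZMod 2`. -/
def dot {n : ℕ} (u v : Fin n → ZMod 2) : ZMod 2 := ∑ i, u i * v i

/-- Orthogonal complement of a submodule w.r.t. the standard dot product. -/
def orth {n : ℕ} (D : Submodule (ZMod 2) (Fin n → ZMod 2)) :
    Submodule (ZMod 2) (Fin n → ZMod 2) where
  carrier := {v | ∀ w ∈ D, dot v w = 0}
  add_mem' := by
    intro a b ha hb w hw
    have h : dot (a + b) w = dot a w + dot b w := by
      simp [dot, add_mul, Finset.sum_add_distrib]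
    rw [h, ha w hw, hb w hw, add_zero]
  zero_mem' := by
    intro w hw
    simp [dot]
  smul_mem' := by
    intro c v hv w hw
    have h : dot (c • v) w = c * dot v w := by
      simp [dot, Finset.mul_sum, mul_assoc]
    rw [h, hv w hw, mul_zero]

theorem dot_comm {n : ℕ} (u v : Fin n → ZMod 2) : dot u v = dot v u := by
  simp [dot, mul_comm]

theorem dot_add_left {n : ℕ} (a b w : Fin n → ZMod 2) : dot (a + b) w = dot a w + dot b w := by
  simp [dot, add_mul, Finset.sum_add_distrib]

theorem dot_add_right {n : ℕ} (a b w : Fin n → ZMod 2) : dot w (a + b) = dot w a + dot w b := by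
  simp [dot, mul_add, Finset.sum_add_distrib]

theorem dot_sum_smul_left {n m : ℕ} (c : Fin m → ZMod 2) (w : Fin m → Fin n → ZMod 2)
    (v : Fin n → ZMod 2) : dot (∑ j, c j • w j) v = ∑ j, c j * dot (w j) v := by
  simp only [dot, Finset.sum_apply, Pi.smul_apply, smul_eq_mul, Finset.sum_mul, Finset.mul_sum]
  rw [Finset.sum_comm]
  simp [mul_assoc]

theorem eq_one_of_ne_zero_zmod_two {a : ZMod 2} (h : a ≠ 0) : a = 1 := by
  revert a; decide

/-- If `D^⊥ ⊆ D` and `n` is odd, the dot product on `D` is not alternating: otherwise the all-ones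
vector would lie in `D^⊥ ⊆ D` and be orthogonal to itself. -/
theorem exists_dot_self_eq_one {n : ℕ} (hn : Odd n) {D : Submodule (ZMod 2) (Fin n → ZMod 2)}
    (hD : orth D ≤ D) : ∃ v ∈ D, dot v v = 1 := by
  by_contra! h
  have h1 : (fun _ => 1 : Fin n → ZMod 2) ∈ orth D := by
    intro v hv
    have hsq : ∀ a : ZMod 2, 1 * a = a * a := by decide
    have : dot (fun _ => 1) v = dot v v := Finset.sum_congr rfl fun i _ => hsq (v i)
    rw [this]
    by_contra h0
    exact h v hv (eq_one_of_ne_zero_zmod_two h0)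
  have h2 := h1 _ (hD h1)
  obtain ⟨k, rfl⟩ := hn
  have h3 : (2 : ZMod 2) = 0 := by decide
  simp [dot, h3] at h2

/-- `w` is a family of vectors of `D` that is orthonormal for the dot product. -/
def OrthonormalIn {n m : ℕ} (D : Submodule (ZMod 2) (Fin n → ZMod 2))
    (w : Fin m → Fin n → ZMod 2) : Prop :=
  (∀ j, w j ∈ D) ∧ ∀ i j, dot (w i) (w j) = if i = j then 1 else 0

namespace OrthonormalIn

variable {n m : ℕ} {D : Submodule (ZMod 2) (Fin n → ZMod 2)} {w : Fin m → Fin n → ZMod 2}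

theorem cons (h : OrthonormalIn D w) {a : Fin n → ZMod 2} (ha : a ∈ D) (haa : dot a a = 1)
    (haw : ∀ j, dot a (w j) = 0) :
    OrthonormalIn D (Fin.cons a w : Fin (m + 1) → Fin n → ZMod 2) := by
  refine ⟨fun j => ?_, fun i j => ?_⟩
  · refine Fin.cases ?_ (fun j => ?_) j
    · simpa using ha
    · simpa using h.1 j
  · refine Fin.cases ?_ (fun i => ?_) i <;> refine Fin.cases ?_ (fun j => ?_) j
    · simpa using haa
    · simpa [(Fin.succ_ne_zero j).symm] using haw j
    · simpa [dot_comm _ a] using haw i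
    · simpa using h.2 i j

theorem dot_sum_smul (h : OrthonormalIn D w) (c : Fin m → ZMod 2) (i : Fin m) :
    dot (∑ j, c j • w j) (w i) = c i := by
  simp [dot_sum_smul_left, h.2]

theorem linearIndependent (h : OrthonormalIn D w) : LinearIndependent (ZMod 2) w := by
  rw [Fintype.linearIndependent_iff]
  intro c hc i
  rw [← h.dot_sum_smul c i, hc]
  simp [dot]

theorem length_le (h : OrthonormalIn D w) : m ≤ n := by
  simpa using h.linearIndependent.fintype_card_le_finrank

/-- Vectors of `D` orthogonal to a nonempty orthonormal family of maximal length are orthogonal to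
each other and to themselves. -/
theorem dot_eq_zero_of_maximal (h : OrthonormalIn D w) (hm : m ≠ 0)
    (hmax : ∀ m' (w' : Fin m' → Fin n → ZMod 2), OrthonormalIn D w' → m' ≤ m)
    {e f : Fin n → ZMod 2} (he : e ∈ D) (hf : f ∈ D)
    (hew : ∀ j, dot e (w j) = 0) (hfw : ∀ j, dot f (w j) = 0) : dot e f = 0 := by
  have isotropic : ∀ v ∈ D, (∀ j, dot v (w j) = 0) → dot v v = 0 := by
    intro v hv hvw
    by_contra h0
    have := hmax _ _ (h.cons hv (eq_one_of_ne_zero_zmod_two h0) hvw)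
    omega
  have hee := isotropic e he hew
  have hff := isotropic f hf hfw
  by_contra h0
  have hef := eq_one_of_ne_zero_zmod_two h0
  have hfe : dot f e = 1 := by rw [dot_comm, hef]
  obtain ⟨m, rfl⟩ := Nat.exists_eq_succ_of_ne_zero hm
  have htail : OrthonormalIn D (fun j : Fin m => w j.succ) :=
    ⟨fun j => h.1 _, fun i j => by simpa using h.2 i.succ j.succ⟩
  have hu : w 0 ∈ D := h.1 0
  have huu : dot (w 0) (w 0) = 1 := by simpa using h.2 0 0
  have hut : ∀ j : Fin m, dot (w 0) (w j.succ) = 0 := fun j => by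
    simpa [(Fin.succ_ne_zero j).symm] using h.2 0 j.succ
  have hue : dot (w 0) e = 0 := by rw [dot_comm, hew]
  have huf : dot (w 0) f = 0 := by rw [dot_comm, hfw]
  have h2 : (1 + 1 : ZMod 2) = 0 := by decide
  -- Replace `u = w 0` by `u + e`, `u + f`, `u + e + f`, lengthening the family by two.
  have h1 := htail.cons (a := w 0 + e + f) (D.add_mem (D.add_mem hu he) hf)
    (by simp [dot_add_left, dot_add_right, *]) (fun j => by simp [dot_add_left, *])
  have h2' := h1.cons (a := w 0 + f) (D.add_mem hu hf)
    (by simp [dot_add_left, dot_add_right, *])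
    (fun j => by
      refine Fin.cases ?_ (fun j => ?_) j <;> simp [dot_add_left, dot_add_right, *])
  have h3 := h2'.cons (a := w 0 + e) (D.add_mem hu he)
    (by simp [dot_add_left, dot_add_right, *])
    (fun j => by
      refine Fin.cases ?_ (fun j => Fin.cases ?_ (fun j => ?_) j) j <;>
        simp [dot_add_left, dot_add_right, *])
  have := hmax _ _ h3
  omega

/-- A nonempty orthonormal family of maximal length generates `D` over `D^⊥`: subtracting from
`v ∈ D` its projection to the family leaves a vector orthogonal to all of `D`. -/
theorem le_sup_span_of_maximal (h : OrthonormalIn D w) (hm : m ≠ 0)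
    (hmax : ∀ m' (w' : Fin m' → Fin n → ZMod 2), OrthonormalIn D w' → m' ≤ m) :
    D ≤ orth D ⊔ Submodule.span (ZMod 2) (Set.range w) := by
  -- The decomposition `v = r + p`, with `r` orthogonal to the family and `p` in its span;
  -- in characteristic 2 the remainder is a sum.
  have hpD : ∀ v : Fin n → ZMod 2, ∑ j, dot v (w j) • w j ∈ D := fun v =>
    D.sum_mem fun j _ => D.smul_mem _ (h.1 j)
  have hr : ∀ v : Fin n → ZMod 2, ∀ i, dot (v + ∑ j, dot v (w j) • w j) (w i) = 0 := fun v i => by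
    rw [dot_add_left, h.dot_sum_smul]
    exact CharTwo.add_self_eq_zero _
  have hv : ∀ v : Fin n → ZMod 2,
      v = (v + ∑ j, dot v (w j) • w j) + ∑ j, dot v (w j) • w j := fun v => by
    rw [add_assoc, ← two_smul (ZMod 2) (∑ j, dot v (w j) • w j),
      show (2 : ZMod 2) = 0 by decide, zero_smul, add_zero]
  intro v hvD
  rw [hv v]
  refine Submodule.add_mem_sup (fun x hx => ?_) (Submodule.sum_mem _ fun j _ =>
    Submodule.smul_mem _ _ (Submodule.subset_span ⟨j, rfl⟩))
  rw [hv x, dot_add_right, h.dot_eq_zero_of_maximal hm hmax (D.add_mem hvD (hpD v))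
    (D.add_mem hx (hpD x)) (hr v) (hr x), dot_comm _ (∑ j, dot x (w j) • w j),
    dot_sum_smul_left, zero_add]
  exact Finset.sum_eq_zero fun j _ => by rw [dot_comm (w j) (v + _), hr, mul_zero]

/-- The span of an orthonormal family in `D` meets `D^⊥` trivially. -/
theorem disjoint_orth_span (h : OrthonormalIn D w) :
    Disjoint (orth D) (Submodule.span (ZMod 2) (Set.range w)) := by
  rw [Submodule.disjoint_def]
  intro x hx hxs
  obtain ⟨c, rfl⟩ := (Submodule.mem_span_range_iff_exists_fun _).1 hxs
  refine Finset.sum_eq_zero fun i _ => ?_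
  rw [← h.dot_sum_smul c i, hx _ (h.1 i), zero_smul]

end OrthonormalIn

/-- **Corollary 1.** For odd `n` and `D^⊥ ⊊ D` with
`k = dim D − dim D^⊥`, the code `D` admits an orthonormal family of coset
representatives generating `D` over `D^⊥` (a compatible symplectic basis). -/
theorem exists_orthonormal_coset_basis_of_odd_length
    (n : ℕ) (hn : Odd n) (D : Submodule (ZMod 2) (Fin n → ZMod 2))
    (hD : orth D < D) :
    ∃ w : Fin (Module.finrank (ZMod 2) D - Module.finrank (ZMod 2) (orth D)) →
        (Fin n → ZMod 2),
      (∀ j, w j ∈ D) ∧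
      D = orth D ⊔ Submodule.span (ZMod 2) (Set.range w) ∧
      (∀ i j, dot (w i) (w j) = if i = j then 1 else 0) := by
  obtain ⟨v, hvD, hvv⟩ := exists_dot_self_eq_one hn hD.le
  have h1 : OrthonormalIn D (fun _ : Fin 1 => v) :=
    ⟨fun _ => hvD, fun i j => by simpa [Subsingleton.elim i j] using hvv⟩
  classical
  let P : ℕ → Prop := fun m => ∃ w : Fin m → Fin n → ZMod 2, OrthonormalIn D w
  have hP1 : P 1 := ⟨_, h1⟩
  obtain ⟨w, hw⟩ : P (Nat.findGreatest P n) := Nat.findGreatest_spec h1.length_le hP1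
  have hm : 1 ≤ Nat.findGreatest P n := Nat.le_findGreatest h1.length_le hP1
  have hmax : ∀ m' (w' : Fin m' → Fin n → ZMod 2), OrthonormalIn D w' →
      m' ≤ Nat.findGreatest P n := fun m' w' h' => Nat.le_findGreatest h'.length_le ⟨w', h'⟩
  generalize Nat.findGreatest P n = m at w hw hm hmax
  have hsup : D = orth D ⊔ Submodule.span (ZMod 2) (Set.range w) :=
    le_antisymm (hw.le_sup_span_of_maximal (by omega) hmax)
      (sup_le hD.le (Submodule.span_le.2 (Set.range_subset_iff.2 hw.1)))
  have hdim := Submodule.finrank_sup_add_finrank_inf_eq (orth D)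
    (Submodule.span (ZMod 2) (Set.range w))
  rw [← hsup, hw.disjoint_orth_span.eq_bot, finrank_bot,
    finrank_span_eq_card hw.linearIndependent, Fintype.card_fin] at hdim
  obtain rfl : m = Module.finrank (ZMod 2) D - Module.finrank (ZMod 2) (orth D) := by omega
  exact ⟨w, hw.1, hsup, hw.2⟩
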